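/- Let n_b ≥ 2 be an integer, let I ⊆ ℝ be a bounded open interval, and for i = 2,…,n_b let b_i ∈ C^{n_b-1,1}(Ī, ℂ) and let r_i : I → ℂ be absolutely continuous with r_i^i = b_i on I. Set I' := {t ∈ I : b_i(t) ≠ 0 for some i}. For each t₁ ∈ I' fix ℓ = ℓ(t₁) ∈ {2,…,n_b} with |b_ℓ(t₁)|^{1/ℓ} = max_{2≤i≤n_b} |b_i(t₁)|^{1/i} ≠ 0. Let 0 < D < 1/3 and L > 0 be constants and let {J(t₁)}_{t₁∈I'} be a family of open intervals with t₁ ∈ J(t₁) ⊆ I such that for all t₁ ∈ I': L|J(t₁)| + Σ_{i=2}^{n_b} ∫_{J(t₁)} |r_i'| = D |b_{ℓ(t₁)}(t₁)|^{1/ℓ(t₁)}. Call an open interval J = (s₋,s₊) with t₁ ∈ J ⊆ I 'of first kind for t₁' if L(t₁−s₋) + Σ_i ∫_{(s₋,t₁)} |r_i'| = L(s₊−t₁) + Σ_i ∫_{(t₁,s₊)} |r_i'| = (D/2) |b_{ℓ(t₁)}(t₁)|^{1/ℓ(t₁)}. Assume that for every t₁ ∈ I' for which some interval of first kind for t₁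 exists, the chosen J(t₁) is of first kind for t₁. Then the family {J(t₁)}_{t₁∈I'} has a countable subfamily 𝒥 that still covers I' and such that every point of I' belongs to at most two intervals of 𝒥; in particular Σ_{J∈𝒥} |J| ≤ 2|I'|, where |·| denotes Lebesgue measure. -/

import Mathlib

open Set MeasureTheory Real

noncomputable section

/-- `f` is absolutely continuous on the set `S` : for every `ε > 0` there is `δ > 0` such
that for any finitely many non-overlapping intervals `[u i, v i] ⊆ S` of total length `< δ`
the sum `∑ ‖f (v i) - f (u i)‖` is `< ε`. -/
def AbsContOn {E : Type*} [NormedAddCommGroup E] (f : ℝ → E) (S : Set ℝ) : Prop :=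
  ∀ ε : ℝ, 0 < ε → ∃ δ : ℝ, 0 < δ ∧
    ∀ (N : ℕ) (u v : Fin N → ℝ),
      (∀ i, u i ≤ v i ∧ Set.Icc (u i) (v i) ⊆ S) →
      (∀ i j, i ≠ j → Disjoint (Set.Ioo (u i) (v i)) (Set.Ioo (u j) (v j))) →
      (∑ i, (v i - u i)) < δ →
      (∑ i, ‖f (v i) - f (u i)‖) < ε

/-- `d (i+1)` is the derivative of `d i` on `S` for all `i < k`; thus `d i` is the `i`-th
derivative of `d 0` on `S` for `i ≤ k`. -/
def DerivChain {E : Type*} [NormedAddCommGroup E] [NormedSpace ℝ E]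
    (d : ℕ → ℝ → E) (k : ℕ) (S : Set ℝ) : Prop :=
  ∀ i < k, ∀ x ∈ S, HasDerivWithinAt (d i) (d (i + 1) x) S x

/-- Hölder constant of exponent `a` of `g` on `S`. -/
def HolderConst {E : Type*} [NormedAddCommGroup E] (a : ℝ) (S : Set ℝ) (g : ℝ → E) : ℝ :=
  sSup {r : ℝ | ∃ x ∈ S, ∃ y ∈ S, x ≠ y ∧ r = ‖g x - g y‖ / |x - y| ^ a}

/-- Membership in `C^{k,1}(S)`, encoded via the chain of derivatives `d`:
`d 0` is `k` times differentiable with `i`-th derivative `d i`, and the top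
derivative `d k` is Lipschitz. -/
def MemCk1 {E : Type*} [NormedAddCommGroup E] [NormedSpace ℝ E]
    (d : ℕ → ℝ → E) (k : ℕ) (S : Set ℝ) : Prop :=
  DerivChain d k S ∧ ∃ L : ℝ, ∀ x ∈ S, ∀ y ∈ S, ‖d k x - d k y‖ ≤ L * |x - y|

/-- The `C^{k,1}`-norm: sup of all derivatives up to order `k` plus the Lipschitz
(Hölder-1) constant of the `k`-th derivative. -/
def CNorm {E : Type*} [NormedAddCommGroup E] (d : ℕ → ℝ → E) (k : ℕ) (S : Set ℝ) : ℝ :=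
  sSup {r : ℝ | ∃ i ≤ k, ∃ x ∈ S, r = ‖d i x‖} + HolderConst 1 S (d k)

/-- The interval `(sm, sp) ∋ t₁` is *of first kind* for `t₁`: it is contained in `(a,b)`
and the weighted length plus total variation of the radicals is split symmetrically,
each side contributing `(D/2) |b_{ℓ(t₁)}(t₁)|^{1/ℓ(t₁)}`. -/
def FirstKind (nb : ℕ) (a b L D : ℝ) (d : ℕ → ℕ → ℝ → ℂ) (r : ℕ → ℝ → ℂ) (ℓ : ℝ → ℕ)
    (t₁ sm sp : ℝ) : Prop :=
  sm < t₁ ∧ t₁ < sp ∧ Ioo sm sp ⊆ Ioo a b ∧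
  L * (t₁ - sm) + (∑ i ∈ Finset.Icc 2 nb, ∫ t in Ioo sm t₁, ‖deriv (r i) t‖) =
    D / 2 * ‖d (ℓ t₁) 0 t₁‖ ^ ((ℓ t₁ : ℝ)⁻¹) ∧
  L * (sp - t₁) + (∑ i ∈ Finset.Icc 2 nb, ∫ t in Ioo t₁ sp, ‖deriv (r i) t‖) =
    D / 2 * ‖d (ℓ t₁) 0 t₁‖ ^ ((ℓ t₁ : ℝ)⁻¹)


lemma three_intervals {x a1 b1 a2 b2 a3 b3 : ℝ} (h1 : x ∈ Ioo a1 b1) (h2 : x ∈ Ioo a2 b2)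
    (h3 : x ∈ Ioo a3 b3) :
    (Ioo a1 b1 ⊆ Ioo a2 b2 ∪ Ioo a3 b3) ∨ (Ioo a2 b2 ⊆ Ioo a1 b1 ∪ Ioo a3 b3) ∨
      (Ioo a3 b3 ⊆ Ioo a1 b1 ∪ Ioo a2 b2) := by
  simp only [mem_Ioo] at h1 h2 h3
  have key : ∀ {p q p' q' p'' q'' : ℝ}, p' < x → x < q'' → x < q' → p'' < x → p' ≤ p → q ≤ q'' →
      Ioo p q ⊆ Ioo p' q' ∪ Ioo p'' q'' := by
    intro p q p' q' p'' q'' h1 h2 h3 h4 h5 h6 y hy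
    simp only [mem_union, mem_Ioo] at *
    rcases le_or_gt y x with h | h
    · left; constructor <;> linarith
    · right; constructor <;> linarith
  rcases le_total a1 a2 with h12 | h12 <;> rcases le_total a1 a3 with h13 | h13 <;>
  rcases le_total a2 a3 with h23 | h23 <;> rcases le_total b1 b2 with g12 | g12 <;>
  rcases le_total b1 b3 with g13 | g13 <;> rcases le_total b2 b3 with g23 | g23 <;>
  first
  | (left; apply key <;> linarith)
  | (left; rw [union_comm]; apply key <;> linarith)
  | (right; left; apply key <;> linarith)
  | (right; left; rw [union_comm]; apply key <;> linarith)
  | (right; right; apply key <;> linarith)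
  | (right; right; rw [union_comm]; apply key <;> linarith)

lemma minimal_cover (U : Set ℝ) (A : ℝ → Set ℝ) (T0 : Set ℝ)
    (hcov : ∀ x ∈ U, ∃ t ∈ T0, x ∈ A t)
    (hfin : ∀ x ∈ U, {t | t ∈ T0 ∧ x ∈ A t}.Finite) :
    ∃ T ⊆ T0, (∀ x ∈ U, ∃ t ∈ T, x ∈ A t) ∧
      ∀ t ∈ T, ∃ x ∈ U, ∀ s ∈ T, x ∈ A s → s = t := by
  obtain ⟨T, hT0, hmin⟩ := zorn_superset_nonempty
    {T : Set ℝ | T ⊆ T0 ∧ ∀ x ∈ U, ∃ t ∈ T, x ∈ A t} (by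
      intro c hc hchain hne
      refine ⟨⋂₀ c, ⟨?_, ?_⟩, fun s hs => sInter_subset_of_mem hs⟩
      · obtain ⟨s, hs⟩ := hne
        exact (sInter_subset_of_mem hs).trans (hc hs).1
      · intro x hx
        by_contra hcon
        push Not at hcon
        -- each t in the finite set is missed by some element of c
        have h1 : ∀ t ∈ {t | t ∈ T0 ∧ x ∈ A t}, ∃ s ∈ c, t ∉ s := by
          intro t ht
          by_contra h2
          push Not at h2
          exact hcon t (mem_sInter.2 h2) ht.2
        have h3 : ∀ F : Set ℝ, F.Finite → (∀ t ∈ F, ∃ s ∈ c, t ∉ s) → ∃ s ∈ c, ∀ t ∈ F, t ∉ s := by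
          intro F hF
          induction F, hF using Set.Finite.induction_on with
          | empty => intro _; obtain ⟨s, hs⟩ := hne; exact ⟨s, hs, by simp⟩
          | @insert y F _ _ ih =>
            intro h
            obtain ⟨s, hs, hs'⟩ := ih (fun t ht => h t (mem_insert_of_mem _ ht))
            obtain ⟨s2, hs2, hs2'⟩ := h y (mem_insert _ _)
            rcases hchain.total hs hs2 with h4 | h4
            · refine ⟨s, hs, ?_⟩
              intro t ht
              rcases mem_insert_iff.1 ht with rfl | ht
              · exact fun h => hs2' (h4 h)
              · exact hs' t ht
            · refine ⟨s2, hs2, ?_⟩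
              intro t ht
              rcases mem_insert_iff.1 ht with rfl | ht
              · exact hs2'
              · exact fun h => hs' t ht (h4 h)
        obtain ⟨s, hs, hs'⟩ := h3 _ (hfin x hx) h1
        obtain ⟨t, ht, hxt⟩ := (hc hs).2 x hx
        exact hs' t ⟨(hc hs).1 ht, hxt⟩ ht) T0 ⟨Subset.rfl, hcov⟩
  refine ⟨T, hT0, hmin.prop.2, ?_⟩
  intro t ht
  by_contra hcon
  push Not at hcon
  have : T \ {t} ∈ {T : Set ℝ | T ⊆ T0 ∧ ∀ x ∈ U, ∃ t ∈ T, x ∈ A t} := by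
    refine ⟨sdiff_subset.trans hT0, ?_⟩
    intro x hx
    obtain ⟨s, hs, h1, h2⟩ := hcon x hx
    exact ⟨s, ⟨hs, h2⟩, h1⟩
  exact (hmin.le_of_le this sdiff_subset ht).2 rfl

lemma cover_select (U : Set ℝ) (hUm : MeasurableSet U) (hUfin : volume U ≠ ⊤)
    (J : ℝ → ℝ × ℝ) (T0 : Set ℝ)
    (hlt : ∀ t ∈ T0, (J t).1 < (J t).2)
    (hsub : ∀ t ∈ T0, Ioo (J t).1 (J t).2 ⊆ U)
    (hcov : ∀ x ∈ U, ∃ t ∈ T0, x ∈ Ioo (J t).1 (J t).2)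
    (hfin : ∀ x ∈ U, {t | t ∈ T0 ∧ x ∈ Ioo (J t).1 (J t).2}.Finite) :
    ∃ T ⊆ T0, T.Countable ∧ (U ⊆ ⋃ t ∈ T, Ioo (J t).1 (J t).2) ∧
      (∀ x ∈ U, {t | t ∈ T ∧ x ∈ Ioo (J t).1 (J t).2}.encard ≤ 2) ∧
      ∑' t : T, ((J (t : ℝ)).2 - (J (t : ℝ)).1) ≤ 2 * (volume U).toReal := by
  classical
  obtain ⟨T, hT0, hTcov, hTmin⟩ := minimal_cover U (fun t => Ioo (J t).1 (J t).2) T0 hcov hfin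
  have hthree : ∀ x, ∀ t1 ∈ T, ∀ t2 ∈ T, ∀ t3 ∈ T, x ∈ Ioo (J t1).1 (J t1).2 →
      x ∈ Ioo (J t2).1 (J t2).2 → x ∈ Ioo (J t3).1 (J t3).2 → t1 = t2 ∨ t1 = t3 ∨ t2 = t3 := by
    intro x t1 h1 t2 h2 t3 h3 hx1 hx2 hx3
    have aux : ∀ t1 ∈ T, ∀ t2 ∈ T, ∀ t3 ∈ T, Ioo (J t1).1 (J t1).2 ⊆
        Ioo (J t2).1 (J t2).2 ∪ Ioo (J t3).1 (J t3).2 → t1 = t2 ∨ t1 = t3 := by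
      intro t1 h1 t2 h2 t3 h3 hs
      obtain ⟨y, hyU, hy⟩ := hTmin t1 h1
      obtain ⟨s, hs', hys⟩ := hTcov y hyU
      have := hy s hs' hys
      subst this
      rcases hs hys with h | h
      · exact Or.inl (hy _ h2 h).symm
      · exact Or.inr (hy _ h3 h).symm
    rcases three_intervals hx1 hx2 hx3 with h | h | h
    · rcases aux _ h1 _ h2 _ h3 h with h | h <;> tauto
    · rcases aux _ h2 _ h1 _ h3 h with h | h
      · exact Or.inl h.symm
      · tauto
    · rcases aux _ h3 _ h1 _ h2 h with h | h
      · exact Or.inr (Or.inl h.symm)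
      · exact Or.inr (Or.inr h.symm)
  have hcard : ∀ x, {t | t ∈ T ∧ x ∈ Ioo (J t).1 (J t).2}.encard ≤ 2 := by
    intro x
    by_contra hcon
    push Not at hcon
    have h3 : (3 : ℕ∞) ≤ {t | t ∈ T ∧ x ∈ Ioo (J t).1 (J t).2}.encard := by
      have := Order.add_one_le_of_lt hcon
      have e : (2 : ℕ∞) + 1 = 3 := by norm_num
      rwa [e] at this
    obtain ⟨S, hS, hS3⟩ := Set.exists_subset_encard_eq h3
    obtain ⟨p, q, r, hpq, hpr, hqr, rfl⟩ := Set.encard_eq_three.1 hS3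
    have hp := hS (by simp : p ∈ ({p, q, r} : Set ℝ))
    have hq := hS (by simp : q ∈ ({p, q, r} : Set ℝ))
    have hr := hS (by simp : r ∈ ({p, q, r} : Set ℝ))
    rcases hthree x p hp.1 q hq.1 r hr.1 hp.2 hq.2 hr.2 with h | h | h <;> contradiction
  refine ⟨T, hT0, ?_, ?_, fun x _ => hcard x, ?_⟩
  · have : T ⊆ ⋃ q : ℚ, {t | t ∈ T ∧ (q : ℝ) ∈ Ioo (J t).1 (J t).2} := by
      intro t ht
      obtain ⟨q, hq1, hq2⟩ := exists_rat_btwn (hlt t (hT0 ht))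
      exact mem_iUnion.2 ⟨q, ht, hq1, hq2⟩
    refine Set.Countable.mono this (countable_iUnion fun q => ?_)
    apply Set.Finite.countable
    exact Set.finite_of_encard_le_coe (k := 2) (hcard q)
  · intro x hx
    obtain ⟨t, ht, h⟩ := hTcov x hx
    exact mem_iUnion₂.2 ⟨t, ht, h⟩
  · apply Real.tsum_le_of_sum_le
    · intro t
      simpa using (hlt t (hT0 t.2)).le
    · intro S
      have h1 : ∑ t ∈ S, ((J (t : ℝ)).2 - (J (t : ℝ)).1) =
          (∑ t ∈ S, volume (Ioo (J (t : ℝ)).1 (J (t : ℝ)).2)).toReal := by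
        rw [ENNReal.toReal_sum]
        · refine Finset.sum_congr rfl fun t _ => ?_
          rw [Real.volume_Ioo, ENNReal.toReal_ofReal]
          linarith [hlt t (hT0 t.2)]
        · simp
      have h2 : (∑ t ∈ S, volume (Ioo (J (t : ℝ)).1 (J (t : ℝ)).2)) ≤ 2 * volume U := by
        calc (∑ t ∈ S, volume (Ioo (J (t : ℝ)).1 (J (t : ℝ)).2))
            = ∑ t ∈ S, ∫⁻ x, (Ioo (J (t : ℝ)).1 (J (t : ℝ)).2).indicator 1 x := by
              refine Finset.sum_congr rfl fun t _ => ?_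
              rw [lintegral_indicator_one measurableSet_Ioo]
          _ = ∫⁻ x, ∑ t ∈ S, (Ioo (J (t : ℝ)).1 (J (t : ℝ)).2).indicator 1 x := by
              rw [lintegral_finsetSum]
              intro t _
              exact measurable_one.indicator measurableSet_Ioo
          _ ≤ ∫⁻ x, U.indicator (fun _ => 2) x := by
              refine lintegral_mono fun x => ?_
              by_cases hx : x ∈ U
              · rw [indicator_of_mem hx]
                have e : ∑ t ∈ S, (Ioo (J (t : ℝ)).1 (J (t : ℝ)).2).indicator (1 : ℝ → ENNReal) x
                    = ((S.filter (fun t : T => x ∈ Ioo (J (t : ℝ)).1 (J (t : ℝ)).2)).card : ENNReal) := by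
                  rw [Finset.card_filter]
                  push_cast
                  refine Finset.sum_congr rfl fun t _ => ?_
                  simp [indicator_apply]
                rw [e]
                have h5 : (S.filter (fun t : T => x ∈ Ioo (J (t : ℝ)).1 (J (t : ℝ)).2)).card ≤ 2 := by
                  by_contra hc
                  push Not at hc
                  obtain ⟨p, q, r, hp, hq, hr, hpq, hpr, hqr⟩ := Finset.two_lt_card_iff.1 hc
                  simp only [Finset.mem_filter] at hp hq hr
                  rcases hthree x p p.2 q q.2 r r.2 hp.2 hq.2 hr.2 with h | h | h
                  · exact hpq (Subtype.ext h)
                  · exact hpr (Subtype.ext h)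
                  · exact hqr (Subtype.ext h)
                exact (Nat.cast_le (α := ENNReal).2 h5).trans (by simp)
              · rw [indicator_of_notMem hx]
                rw [Finset.sum_eq_zero]
                intro t _
                rw [indicator_of_notMem]
                exact fun h => hx (hsub t (hT0 t.2) h)
          _ = 2 * volume U := by
              rw [lintegral_indicator hUm, setLIntegral_const]
      rw [h1]
      calc _ ≤ (2 * volume U).toReal := ENNReal.toReal_mono (by finiteness) h2
        _ = _ := by simp

lemma right_end (a b D : ℝ) (hab : a < b) (hD0 : 0 < D) (Φ M : ℝ → ℝ) (J : ℝ → ℝ × ℝ)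
    (hΦc : ContinuousOn Φ (Icc a b)) (hΦm : StrictMonoOn Φ (Icc a b))
    (hM0 : ∀ t ∈ Ioo a b, 0 ≤ M t) (hMc : ContinuousOn M (Ioo a b))
    (hJ : ∀ t ∈ Ioo a b, 0 < M t → a ≤ (J t).1 ∧ (J t).1 < t ∧ t < (J t).2 ∧ (J t).2 ≤ b ∧
      Φ (J t).2 - Φ (J t).1 = D * M t)
    (hfirst : ∀ t ∈ Ioo a b, 0 < M t → ∀ sm sp, a ≤ sm → sm < t → t < sp → sp ≤ b →
      Φ t - Φ sm = D / 2 * M t → Φ sp - Φ t = D / 2 * M t →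
      Φ t - Φ (J t).1 = D / 2 * M t ∧ Φ (J t).2 - Φ t = D / 2 * M t) :
    ∃ E : Set ℝ, E.Finite ∧ (∀ t ∈ E, t ∈ Ioo a b ∧ 0 < M t) ∧
      ∀ ε > 0, ∃ c < b, ∀ t ∈ Ioo a b, c < t → ε ≤ M t →
        ∃ s ∈ E, t ∈ Ioo (J s).1 (J s).2 := by
  have haI : a ∈ Icc a b := ⟨le_rfl, hab.le⟩
  have hbI : b ∈ Icc a b := ⟨hab.le, le_rfl⟩
  have hDM : ∀ t ∈ Ioo a b, D * M t ≤ Φ b - Φ a := by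
    intro t ht
    rcases (hM0 t ht).eq_or_lt with h | h
    · rw [← h]; linarith [hΦm haI hbI hab]
    · obtain ⟨h1, h2, h3, h4, h5⟩ := hJ t ht h
      have e1 := hΦm.monotoneOn haI (show (J t).1 ∈ Icc a b from ⟨h1, by linarith⟩) h1
      have e2 := hΦm.monotoneOn (show (J t).2 ∈ Icc a b from ⟨by linarith, h4⟩) hbI h4
      linarith
  by_cases hex : ∃ t ∈ Ioo a b, 0 < M t ∧ (J t).2 = b
  · obtain ⟨t, ht, hMt, hb⟩ := hex
    refine ⟨{t}, finite_singleton t, ?_, ?_⟩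
    · rintro s rfl; exact ⟨ht, hMt⟩
    · intro ε hε
      have := hJ t ht hMt
      refine ⟨(J t).1, by linarith, ?_⟩
      intro s hs h _
      exact ⟨t, rfl, h, by rw [hb]; exact hs.2⟩
  · push Not at hex
    refine ⟨∅, finite_empty, by simp, ?_⟩
    -- no zero of g
    have hnz : ∀ t ∈ Ioo a b, Φ b - Φ t - D / 2 * M t ≠ 0 := by
      intro t ht h0
      have htI : t ∈ Icc a b := ⟨ht.1.le, ht.2.le⟩
      have h1 := hΦm htI hbI ht.2
      have hMt : 0 < M t := by
        rcases (hM0 t ht).eq_or_lt with h | h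
        · rw [← h] at h0; linarith
        · exact h
      have h2 := hDM t ht
      obtain ⟨sm, hsm, hsm'⟩ : Φ t - D / 2 * M t ∈ Φ '' Icc a t := by
        apply intermediate_value_Icc ht.1.le (hΦc.mono (Icc_subset_Icc_right ht.2.le))
        constructor
        · linarith
        · have : 0 < D / 2 * M t := by positivity
          linarith
      have hlt : sm < t := by
        rcases hsm.2.eq_or_lt with h | h
        · have : 0 < D / 2 * M t := by positivity
          rw [h] at hsm'; linarith
        · exact h
      have h3 := hfirst t ht hMt sm b hsm.1 hlt ht.2 le_rfl (by linarith) (by linarith)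
      obtain ⟨g1, g2, g3, g4, g5⟩ := hJ t ht hMt
      apply hex t ht hMt
      apply hΦm.injOn (⟨by linarith [ht.1], g4⟩ : (J t).2 ∈ Icc a b) hbI
      linarith
    -- g positive somewhere near a
    have hRpos := hΦm haI hbI hab
    obtain ⟨t0, ht0, hgt0⟩ : ∃ t0 ∈ Ioo a b, 0 < Φ b - Φ t0 - D / 2 * M t0 := by
      obtain ⟨t0, ht0, h⟩ : (Φ a + (Φ b - Φ a) / 4) ∈ Φ '' Ioo a b := by
        apply intermediate_value_Ioo hab.le hΦc
        constructor <;> linarith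
      refine ⟨t0, ht0, ?_⟩
      have := hDM t0 ht0
      linarith
    have hgpos : ∀ t ∈ Ioo a b, 0 < Φ b - Φ t - D / 2 * M t := by
      intro t ht
      by_contra hneg
      push Not at hneg
      have hgc : ContinuousOn (fun t => Φ b - Φ t - D / 2 * M t) (Ioo a b) :=
        (continuousOn_const.sub (hΦc.mono Ioo_subset_Icc_self)).sub (continuousOn_const.mul hMc)
      have himg := isPreconnected_Ioo.intermediate_value ht ht0 hgc
      obtain ⟨z, hz, hz'⟩ := himg ⟨hneg, hgt0.le⟩
      exact hnz z hz hz'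
    intro ε hε
    have hbc := hΦc b hbI
    obtain ⟨c, hc, hc'⟩ : ∃ c < b, ∀ t ∈ Ioo a b, c < t → Φ b - Φ t < D / 2 * ε := by
      rw [Metric.continuousWithinAt_iff] at hbc
      obtain ⟨δ, hδ, h⟩ := hbc (D / 2 * ε) (by positivity)
      refine ⟨b - δ, by linarith, ?_⟩
      intro t ht hct
      have := h (x := t) ⟨ht.1.le, ht.2.le⟩ (by rw [Real.dist_eq, abs_lt]; constructor <;> linarith [ht.2])
      rw [Real.dist_eq, abs_lt] at this
      linarith
    refine ⟨c, hc, ?_⟩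
    intro t ht hct hεM
    exfalso
    have h1 := hc' t ht hct
    have h2 := hgpos t ht
    have : D / 2 * ε ≤ D / 2 * M t := by gcongr
    linarith

lemma left_end (a b D : ℝ) (hab : a < b) (hD0 : 0 < D) (Φ M : ℝ → ℝ) (J : ℝ → ℝ × ℝ)
    (hΦc : ContinuousOn Φ (Icc a b)) (hΦm : StrictMonoOn Φ (Icc a b))
    (hM0 : ∀ t ∈ Ioo a b, 0 ≤ M t) (hMc : ContinuousOn M (Ioo a b))
    (hJ : ∀ t ∈ Ioo a b, 0 < M t → a ≤ (J t).1 ∧ (J t).1 < t ∧ t < (J t).2 ∧ (J t).2 ≤ b ∧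
      Φ (J t).2 - Φ (J t).1 = D * M t)
    (hfirst : ∀ t ∈ Ioo a b, 0 < M t → ∀ sm sp, a ≤ sm → sm < t → t < sp → sp ≤ b →
      Φ t - Φ sm = D / 2 * M t → Φ sp - Φ t = D / 2 * M t →
      Φ t - Φ (J t).1 = D / 2 * M t ∧ Φ (J t).2 - Φ t = D / 2 * M t) :
    ∃ E : Set ℝ, E.Finite ∧ (∀ t ∈ E, t ∈ Ioo a b ∧ 0 < M t) ∧
      ∀ ε > 0, ∃ c > a, ∀ t ∈ Ioo a b, t < c → ε ≤ M t →
        ∃ s ∈ E, t ∈ Ioo (J s).1 (J s).2 := by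
  have hIoo : ∀ t, t ∈ Ioo (-b) (-a) → -t ∈ Ioo a b := fun t ht =>
    ⟨by linarith [ht.2], by linarith [ht.1]⟩
  have hIcc : ∀ t, t ∈ Icc (-b) (-a) → -t ∈ Icc a b := fun t ht =>
    ⟨by linarith [ht.2], by linarith [ht.1]⟩
  obtain ⟨E, hE, hE1, hE2⟩ := right_end (-b) (-a) D (by linarith) hD0 (fun x => -Φ (-x))
    (fun x => M (-x)) (fun x => (-(J (-x)).2, -(J (-x)).1))
    ((hΦc.comp continuousOn_neg hIcc).neg)
    (by
      intro x hx y hy hxy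
      simp only [neg_lt_neg_iff]
      exact hΦm (hIcc y hy) (hIcc x hx) (by linarith))
    (fun t ht => hM0 _ (hIoo t ht))
    (hMc.comp continuousOn_neg hIoo)
    (by
      intro t ht hM
      obtain ⟨h1, h2, h3, h4, h5⟩ := hJ _ (hIoo t ht) hM
      simp only [neg_neg]
      refine ⟨?_, ?_, ?_, ?_, ?_⟩ <;> linarith)
    (by
      intro t ht hM sm sp h1 h2 h3 h4 h5 h6
      have := hfirst _ (hIoo t ht) hM (-sp) (-sm) (by linarith) (by linarith) (by linarith)
        (by linarith) (by linarith) (by linarith)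
      simp only [neg_neg]
      constructor <;> linarith [this.1, this.2])
  refine ⟨(fun x => -x) '' E, hE.image _, ?_, ?_⟩
  · rintro _ ⟨t, ht, rfl⟩
    exact ⟨hIoo _ (hE1 t ht).1, (hE1 t ht).2⟩
  · intro ε hε
    obtain ⟨c, hc, h⟩ := hE2 ε hε
    refine ⟨-c, by linarith, ?_⟩
    intro t ht htc hM
    obtain ⟨s, hs, hs'⟩ := h (-t) ⟨by linarith [ht.2], by linarith [ht.1]⟩ (by linarith)
      (by simpa using hM)
    refine ⟨-s, ⟨s, hs, rfl⟩, ?_⟩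
    simp only [mem_Ioo] at hs' ⊢
    constructor <;> linarith [hs'.1, hs'.2]

lemma point_finite (a b D : ℝ) (hab : a < b) (hD0 : 0 < D) (hD1 : D < 1) (Φ M : ℝ → ℝ)
    (J : ℝ → ℝ × ℝ)
    (hΦc : ContinuousOn Φ (Icc a b)) (hΦm : StrictMonoOn Φ (Icc a b))
    (hM0 : ∀ t ∈ Ioo a b, 0 ≤ M t)
    (hLip : ∀ s ∈ Ioo a b, ∀ t ∈ Ioo a b, s ≤ t → |M t - M s| ≤ Φ t - Φ s)
    (hJ : ∀ t ∈ Ioo a b, 0 < M t → a ≤ (J t).1 ∧ (J t).1 < t ∧ t < (J t).2 ∧ (J t).2 ≤ b ∧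
      Φ (J t).2 - Φ (J t).1 = D * M t)
    (hfirst : ∀ t ∈ Ioo a b, 0 < M t → ∀ sm sp, a ≤ sm → sm < t → t < sp → sp ≤ b →
      Φ t - Φ sm = D / 2 * M t → Φ sp - Φ t = D / 2 * M t →
      Φ t - Φ (J t).1 = D / 2 * M t ∧ Φ (J t).2 - Φ t = D / 2 * M t) :
    ContinuousOn M (Ioo a b) ∧
    (∀ t ∈ Ioo a b, 0 < M t → ∀ x ∈ Ioo (J t).1 (J t).2, x ∈ Ioo a b ∧ 0 < M x) ∧
    ∃ T0 : Set ℝ, (∀ t ∈ T0, t ∈ Ioo a b ∧ 0 < M t) ∧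
      (∀ x ∈ Ioo a b, 0 < M x → ∃ t ∈ T0, x ∈ Ioo (J t).1 (J t).2) ∧
      (∀ x ∈ Ioo a b, 0 < M x → {t | t ∈ T0 ∧ x ∈ Ioo (J t).1 (J t).2}.Finite) := by
  have hLip' : ∀ s ∈ Ioo a b, ∀ t ∈ Ioo a b, |M t - M s| ≤ |Φ t - Φ s| := by
    intro s hs t ht
    rcases le_total s t with h | h
    · exact (hLip s hs t ht h).trans (le_abs_self _)
    · rw [abs_sub_comm, abs_sub_comm (Φ t)]
      exact (hLip t ht s hs h).trans (le_abs_self _)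
  have hMc : ContinuousOn M (Ioo a b) := by
    intro s hs
    have h := hΦc.mono Ioo_subset_Icc_self s hs
    rw [Metric.continuousWithinAt_iff] at h ⊢
    intro ε hε
    obtain ⟨δ, hδ, h⟩ := h ε hε
    exact ⟨δ, hδ, fun t ht htd => (hLip' s hs t ht).trans_lt (h ht htd)⟩
  have hclose : ∀ t ∈ Ioo a b, 0 < M t → ∀ x ∈ Ioo (J t).1 (J t).2,
      x ∈ Ioo a b ∧ |M x - M t| ≤ D * M t := by
    intro t ht hMt x hx
    obtain ⟨h1, h2, h3, h4, h5⟩ := hJ t ht hMt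
    have hxI : x ∈ Ioo a b := ⟨by linarith [hx.1], by linarith [hx.2]⟩
    refine ⟨hxI, (hLip' t ht x hxI).trans ?_⟩
    have m1 : (J t).1 ∈ Icc a b := ⟨h1, by linarith⟩
    have m2 : (J t).2 ∈ Icc a b := ⟨by linarith, h4⟩
    have mx : x ∈ Icc a b := ⟨hxI.1.le, hxI.2.le⟩
    have mt : t ∈ Icc a b := ⟨ht.1.le, ht.2.le⟩
    have e1 := hΦm m1 mx hx.1
    have e2 := hΦm mx m2 hx.2
    have e3 := hΦm m1 mt h2
    have e4 := hΦm mt m2 h3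
    rw [abs_le]; constructor <;> linarith
  have hsub : ∀ t ∈ Ioo a b, 0 < M t → ∀ x ∈ Ioo (J t).1 (J t).2, x ∈ Ioo a b ∧ 0 < M x := by
    intro t ht hMt x hx
    obtain ⟨h1, h2⟩ := hclose t ht hMt x hx
    refine ⟨h1, ?_⟩
    rw [abs_le] at h2
    nlinarith
  refine ⟨hMc, hsub, ?_⟩
  obtain ⟨E1, hE1f, hE1, hE1c⟩ := right_end a b D hab hD0 Φ M J hΦc hΦm hM0 hMc hJ hfirst
  obtain ⟨E2, hE2f, hE2, hE2c⟩ := left_end a b D hab hD0 Φ M J hΦc hΦm hM0 hMc hJ hfirst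
  have hF : ∀ n : ℤ, ∃ F : Set ℝ, F.Finite ∧
      (∀ t ∈ F, t ∈ Ioo a b ∧ M t ∈ Icc ((2:ℝ) ^ n) (2 ^ (n + 1))) ∧
      ∀ x ∈ Ioo a b, M x ∈ Icc ((2:ℝ) ^ n) (2 ^ (n + 1)) →
        ∃ s ∈ E1 ∪ E2 ∪ F, x ∈ Ioo (J s).1 (J s).2 := by
    intro n
    have hpos : (0:ℝ) < 2 ^ n := by positivity
    obtain ⟨c1, hc1, hc1'⟩ := hE1c _ hpos
    obtain ⟨c2, hc2, hc2'⟩ := hE2c _ hpos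
    have hsubI : Icc c2 c1 ⊆ Ioo a b := by
      intro x hx
      exact ⟨lt_of_lt_of_le hc2 hx.1, lt_of_le_of_lt hx.2 hc1⟩
    have hK : IsCompact (Icc c2 c1 ∩ M ⁻¹' Icc ((2:ℝ) ^ n) (2 ^ (n + 1))) := by
      apply isCompact_Icc.of_isClosed_subset _ inter_subset_left
      exact (hMc.mono hsubI).preimage_isClosed_of_isClosed isClosed_Icc isClosed_Icc
    obtain ⟨F, hF1, hF2⟩ := hK.elim_nhds_subcover (fun t => Ioo (J t).1 (J t).2) (by
      intro x hx
      have := hJ x (hsubI hx.1) (hpos.trans_le hx.2.1)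
      exact Ioo_mem_nhds this.2.1 this.2.2.1)
    refine ⟨F, F.finite_toSet, fun t ht => ⟨hsubI (hF1 t ht).1, (hF1 t ht).2⟩, ?_⟩
    intro x hx hMx
    by_cases h1 : c1 < x
    · obtain ⟨s, hs, h⟩ := hc1' x hx h1 hMx.1
      exact ⟨s, Or.inl (Or.inl hs), h⟩
    by_cases h2 : x < c2
    · obtain ⟨s, hs, h⟩ := hc2' x hx h2 hMx.1
      exact ⟨s, Or.inl (Or.inr hs), h⟩
    push Not at h1 h2
    obtain ⟨s, hs, h⟩ := mem_iUnion₂.1 (hF2 ⟨⟨h2, h1⟩, hMx⟩)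
    exact ⟨s, Or.inr hs, h⟩
  choose F hFf hF1 hF2 using hF
  refine ⟨E1 ∪ E2 ∪ ⋃ n, F n, ?_, ?_, ?_⟩
  · rintro t ((ht | ht) | ht)
    · exact hE1 t ht
    · exact hE2 t ht
    · obtain ⟨n, hn⟩ := mem_iUnion.1 ht
      exact ⟨(hF1 n t hn).1, lt_of_lt_of_le (by positivity) (hF1 n t hn).2.1⟩
  · intro x hx hMx
    obtain ⟨n, hn⟩ := exists_mem_Ico_zpow hMx (one_lt_two : (1:ℝ) < 2)
    obtain ⟨s, hs, h⟩ := hF2 n x hx ⟨hn.1, hn.2.le⟩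
    refine ⟨s, ?_, h⟩
    rcases hs with hs | hs
    · exact Or.inl hs
    · exact Or.inr (mem_iUnion.2 ⟨n, hs⟩)
  · intro x hx hMx
    have h1D : 0 < 1 - D := by linarith
    obtain ⟨N1, hN1⟩ := exists_mem_Ico_zpow (show 0 < M x / (1 + D) by positivity)
      (one_lt_two : (1:ℝ) < 2)
    obtain ⟨N2, hN2⟩ := exists_mem_Ico_zpow (show 0 < M x / (1 - D) by positivity)
      (one_lt_two : (1:ℝ) < 2)
    apply Set.Finite.subset
      ((hE1f.union hE2f).union ((Set.finite_Icc (N1 - 1) (N2 + 1)).biUnion fun n _ => hFf n))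
    rintro t ⟨ht | ht, hxt⟩
    · exact Or.inl ht
    · right
      obtain ⟨n, hn⟩ := mem_iUnion.1 ht
      refine mem_iUnion₂.2 ⟨n, ?_, hn⟩
      obtain ⟨htI, htM⟩ := hF1 n t hn
      have hMt : 0 < M t := lt_of_lt_of_le (by positivity) htM.1
      have hc := (hclose t htI hMt x hxt).2
      rw [abs_le] at hc
      have u1 : M x / (1 + D) ≤ M t := by
        rw [div_le_iff₀ (by positivity)]; linarith
      have u2 : M t ≤ M x / (1 - D) := by
        rw [le_div_iff₀ h1D]; linarith
      have v1 : (2:ℝ) ^ N1 ≤ 2 ^ (n + 1) := hN1.1.trans (u1.trans htM.2)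
      have v2 : (2:ℝ) ^ n < 2 ^ (N2 + 1) := lt_of_le_of_lt (htM.1.trans u2) hN2.2
      rw [zpow_le_zpow_iff_right₀ one_lt_two] at v1
      rw [zpow_lt_zpow_iff_right₀ one_lt_two] at v2
      constructor <;> omega

open Filter Topology in
lemma ac_extend (f : ℝ → ℝ) (a b : ℝ) (hab : a < b) (hf : AbsContOn f (Ioo a b)) :
    ∃ g : ℝ → ℝ, AbsolutelyContinuousOnInterval g a b ∧ EqOn f g (Ioo a b) := by
  have huc : UniformContinuousOn f (Ioo a b) := by
    rw [Metric.uniformContinuousOn_iff]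
    intro ε hε
    obtain ⟨δ, hδ, h⟩ := hf ε hε
    refine ⟨δ, hδ, ?_⟩
    have key : ∀ x ∈ Ioo a b, ∀ y ∈ Ioo a b, x ≤ y → dist x y < δ → dist (f x) (f y) < ε := by
      intro x hx y hy hxy hd
      have := h 1 (fun _ => x) (fun _ => y)
        (fun _ => ⟨hxy, fun z hz => ⟨by linarith [hx.1, hz.1], by linarith [hy.2, hz.2]⟩⟩)
        (fun i j hij => absurd (Subsingleton.elim i j) hij)
        (by
          rw [Real.dist_eq, abs_sub_comm, abs_of_nonneg (by linarith)] at hd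
          simpa using hd)
      rw [dist_comm, dist_eq_norm]
      simpa using this
    intro x hx y hy hd
    rcases le_total x y with h | h
    · exact key x hx y hy h hd
    · rw [dist_comm] at hd ⊢
      exact key y hy x hx h hd
  have hlim : ∀ x : ℝ, (𝓝[Ioo a b] x).NeBot → ∃ l, Tendsto f (𝓝[Ioo a b] x) (𝓝 l) := by
    intro x hx
    have hc : Cauchy (map f (𝓝[Ioo a b] x)) := by
      refine Cauchy.map_of_le (cauchy_nhds.mono' hx nhdsWithin_le_nhds) huc ?_
      exact le_principal_iff.2 self_mem_nhdsWithin
    obtain ⟨l, hl⟩ := CompleteSpace.complete hc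
    exact ⟨l, hl⟩
  obtain ⟨la, hla⟩ := hlim a (by
    rw [nhdsWithin_Ioo_eq_nhdsGT hab]; infer_instance)
  obtain ⟨lb, hlb⟩ := hlim b (by
    rw [nhdsWithin_Ioo_eq_nhdsLT hab]; infer_instance)
  rw [nhdsWithin_Ioo_eq_nhdsGT hab] at hla
  rw [nhdsWithin_Ioo_eq_nhdsLT hab] at hlb
  have hgc := continuousOn_Icc_extendFrom_Ioo huc.continuousOn hla hlb
  have hext : ∀ x ∈ Ioo a b, extendFrom (Ioo a b) f x = f x := by
    intro x hx
    exact extendFrom_extends huc.continuousOn x hx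
  set g := extendFrom (Ioo a b) f
  refine ⟨g, ?_, fun x hx => (hext x hx).symm⟩
  rw [absolutelyContinuousOnInterval_iff]
  intro ε hε
  obtain ⟨δ, hδ, h⟩ := hf (ε / 2) (by positivity)
  refine ⟨δ, hδ, ?_⟩
  rintro ⟨n, I⟩ hI hlen
  obtain ⟨hI1, hI2⟩ := hI
  simp only [Finset.mem_range, uIcc_of_le hab.le] at hI1 hlen ⊢
  have hI1' : ∀ i : ℕ, i < n → (I i).1 ∈ Icc a b ∧ (I i).2 ∈ Icc a b := hI1
  set m := (a + b) / 2 with hm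
  let φ : ℝ → ℝ → ℝ := fun η x => (1 - η) * x + η * m
  have hφI : ∀ η ∈ Ioo (0:ℝ) 1, ∀ x ∈ Icc a b, φ η x ∈ Ioo a b := by
    intro η hη x hx
    simp only [φ, mem_Ioo]
    have h1 : 0 < 1 - η := by linarith [hη.2]
    have h2 := hη.1
    constructor <;> nlinarith [hx.1, hx.2]
  have hstep : ∀ η ∈ Ioo (0:ℝ) 1,
      ∑ i ∈ Finset.range n, dist (g (φ η (I i).1)) (g (φ η (I i).2)) ≤ ε / 2 := by
    intro η hη
    have h1 : 0 < 1 - η := by linarith [hη.2]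
    have hmono : StrictMono (φ η) := by
      intro x y hxy
      simp only [φ]
      nlinarith
    have := h n (fun i => φ η (min (I i).1 (I i).2)) (fun i => φ η (max (I i).1 (I i).2))
      (by
        intro i
        have hi := hI1' i i.2
        refine ⟨hmono.monotone min_le_max, ?_⟩
        intro z hz
        have e1 := hφI η hη (min (I i).1 (I i).2) ⟨le_min hi.1.1 hi.2.1, min_le_of_left_le hi.1.2⟩
        have e2 := hφI η hη (max (I i).1 (I i).2) ⟨le_max_of_le_left hi.1.1, max_le hi.1.2 hi.2.2⟩
        exact ⟨by linarith [e1.1, hz.1], by linarith [e2.2, hz.2]⟩)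
      (by
        intro i j hij
        rw [Set.disjoint_left]
        intro z hz1 hz2
        have hd := hI2 (by simp : (i:ℕ) ∈ (Finset.range n : Set ℕ))
          (by simp : (j:ℕ) ∈ (Finset.range n : Set ℕ)) (fun h => hij (Fin.ext h))
        obtain ⟨y, hy⟩ : ∃ y, φ η y = z := ⟨(z - η * m) / (1 - η), by
          simp only [φ]; field_simp; ring⟩
        rw [← hy] at hz1 hz2
        simp only [mem_Ioo, hmono.lt_iff_lt] at hz1 hz2
        have hy1 : y ∈ uIoc (I i).1 (I i).2 := ⟨hz1.1, hz1.2.le⟩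
        have hy2 : y ∈ uIoc (I j).1 (I j).2 := ⟨hz2.1, hz2.2.le⟩
        exact Set.disjoint_left.1 hd hy1 hy2)
      (by
        refine lt_of_le_of_lt ?_ hlen
        rw [← Fin.sum_univ_eq_sum_range (fun i => dist (I i).1 (I i).2)]
        refine Finset.sum_le_sum fun i _ => ?_
        have e : φ η (max (I i).1 (I i).2) - φ η (min (I i).1 (I i).2) =
          (1 - η) * (max (I i).1 (I i).2 - min (I i).1 (I i).2) := by simp only [φ]; ring
        rw [e, max_sub_min_eq_abs', Real.dist_eq]
        nlinarith [abs_nonneg ((I i).1 - (I i).2), hη.1])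
    refine le_of_eq_of_le ?_ this.le
    rw [← Fin.sum_univ_eq_sum_range (fun i => dist (g (φ η (I i).1)) (g (φ η (I i).2)))]
    refine Finset.sum_congr rfl fun i _ => ?_
    have hi := hI1' i i.2
    rw [hext _ (hφI η hη _ hi.1), hext _ (hφI η hη _ hi.2)]
    rcases le_total (I i).1 (I i).2 with hle | hle
    · rw [max_eq_right hle, min_eq_left hle, dist_comm, dist_eq_norm]
    · rw [max_eq_left hle, min_eq_right hle, dist_eq_norm]
  have hφlim : ∀ x ∈ Icc a b, Tendsto (fun η => g (φ η x)) (𝓝[>] 0) (𝓝 (g x)) := by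
    intro x hx
    refine (hgc x hx).tendsto.comp ?_
    apply tendsto_nhdsWithin_of_tendsto_nhds_of_eventually_within
    · have : Continuous (fun η => φ η x) := by simp only [φ]; fun_prop
      have h0 := this.tendsto 0
      simp only [φ] at h0 ⊢
      simp only [sub_zero, one_mul, zero_mul, add_zero] at h0
      exact h0.mono_left nhdsWithin_le_nhds
    · filter_upwards [Ioo_mem_nhdsGT (zero_lt_one : (0:ℝ) < 1)] with η hη
      exact Ioo_subset_Icc_self (hφI η hη x hx)
  have hlim2 : Tendsto (fun η => ∑ i ∈ Finset.range n, dist (g (φ η (I i).1)) (g (φ η (I i).2)))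
      (𝓝[>] 0) (𝓝 (∑ i ∈ Finset.range n, dist (g (I i).1) (g (I i).2))) := by
    apply tendsto_finsetSum
    intro i hi
    have hi := hI1' i (Finset.mem_range.1 hi)
    exact (hφlim _ hi.1).dist (hφlim _ hi.2)
  have : ∑ i ∈ Finset.range n, dist (g (I i).1) (g (I i).2) ≤ ε / 2 := by
    apply le_of_tendsto hlim2
    filter_upwards [Ioo_mem_nhdsGT (zero_lt_one : (0:ℝ) < 1)] with η hη
    exact hstep η hη
  linarith

lemma ac_real (f : ℝ → ℝ) (a b : ℝ) (hab : a < b) (hf : AbsContOn f (Ioo a b)) :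
    IntegrableOn (deriv f) (Ioo a b) ∧ (∀ᵐ x, x ∈ Ioo a b → DifferentiableAt ℝ f x) ∧
    ∀ s ∈ Ioo a b, ∀ t ∈ Ioo a b, s ≤ t → ∫ x in s..t, deriv f x = f t - f s := by
  obtain ⟨g, hg, hfg⟩ := ac_extend f a b hab hf
  have hev : ∀ x ∈ Ioo a b, f =ᶠ[nhds x] g := fun x hx =>
    Filter.eventuallyEq_of_mem (isOpen_Ioo.mem_nhds hx) hfg
  have hder : ∀ x ∈ Ioo a b, deriv f x = deriv g x := fun x hx => (hev x hx).deriv_eq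
  refine ⟨?_, ?_, ?_⟩
  · have h1 := hg.intervalIntegrable_deriv
    rw [intervalIntegrable_iff_integrableOn_Ioo_of_le hab.le] at h1
    exact h1.congr_fun (fun x hx => (hder x hx).symm) measurableSet_Ioo
  · filter_upwards [hg.ae_differentiableAt] with x hx hxI
    have := hx (by rw [uIcc_of_le hab.le]; exact Ioo_subset_Icc_self hxI)
    exact (hev x hxI).differentiableAt_iff.2 this
  · intro s hs t ht hst
    have hsub : Icc s t ⊆ Ioo a b := fun z hz =>
      ⟨lt_of_lt_of_le hs.1 hz.1, lt_of_le_of_lt hz.2 ht.2⟩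
    have h1 : AbsolutelyContinuousOnInterval g s t := hg.mono (by
      rw [uIcc_of_le hab.le, uIcc_of_le hst]
      exact hsub.trans Ioo_subset_Icc_self)
    have h2 := h1.integral_deriv_eq_sub
    rw [hfg hs, hfg ht, ← h2]
    apply intervalIntegral.integral_congr
    intro x hx
    rw [uIcc_of_le hst] at hx
    exact hder x (hsub hx)

lemma ac_complex (f : ℝ → ℂ) (a b : ℝ) (hab : a < b) (hf : AbsContOn f (Ioo a b)) :
    IntegrableOn (fun x => ‖deriv f x‖) (Ioo a b) ∧
    ∀ s ∈ Ioo a b, ∀ t ∈ Ioo a b, s ≤ t → ‖f t - f s‖ ≤ ∫ x in s..t, ‖deriv f x‖ := by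
  have hre : AbsContOn (fun x => (f x).re) (Ioo a b) := by
    intro ε hε
    obtain ⟨δ, hδ, h⟩ := hf ε hε
    refine ⟨δ, hδ, fun N u v h1 h2 h3 => lt_of_le_of_lt ?_ (h N u v h1 h2 h3)⟩
    refine Finset.sum_le_sum fun i _ => ?_
    rw [← Complex.sub_re]
    exact Complex.abs_re_le_norm _
  have him : AbsContOn (fun x => (f x).im) (Ioo a b) := by
    intro ε hε
    obtain ⟨δ, hδ, h⟩ := hf ε hε
    refine ⟨δ, hδ, fun N u v h1 h2 h3 => lt_of_le_of_lt ?_ (h N u v h1 h2 h3)⟩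
    refine Finset.sum_le_sum fun i _ => ?_
    rw [← Complex.sub_im]
    exact Complex.abs_im_le_norm _
  obtain ⟨r1, r2, r3⟩ := ac_real _ a b hab hre
  obtain ⟨i1, i2, i3⟩ := ac_real _ a b hab him
  set u : ℝ → ℝ := fun x => (f x).re with hu
  set v : ℝ → ℝ := fun x => (f x).im with hv
  have hder : ∀ᵐ x, x ∈ Ioo a b → deriv f x = ((deriv u x : ℝ) : ℂ) + ((deriv v x : ℝ) : ℂ) * Complex.I := by
    filter_upwards [r2, i2] with x h1 h2 hx
    have e1 := (h1 hx).hasDerivAt.ofReal_comp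
    have e2 := (h2 hx).hasDerivAt.ofReal_comp
    have e3 := e1.add (e2.mul_const Complex.I)
    have e4 : f = (fun y => ((u y : ℝ) : ℂ)) + fun y => ((v y : ℝ) : ℂ) * Complex.I := by
      funext y
      simp [u, v, Complex.re_add_im]
    rw [← e4] at e3
    exact e3.deriv
  have hint : IntegrableOn (fun x => ((deriv u x : ℝ) : ℂ) + ((deriv v x : ℝ) : ℂ) * Complex.I) (Ioo a b) :=
    (r1.ofReal).add ((i1.ofReal).mul_const _)
  have hintf : IntegrableOn (deriv f) (Ioo a b) := by
    refine hint.congr ?_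
    rw [Filter.EventuallyEq, ae_restrict_iff' measurableSet_Ioo]
    filter_upwards [hder] with x hx h
    exact (hx h).symm
  refine ⟨hintf.norm, ?_⟩
  intro s hs t ht hst
  have hsub : Ioc s t ⊆ Ioo a b := fun z hz =>
      ⟨lt_trans hs.1 hz.1, lt_of_le_of_lt hz.2 ht.2⟩
  have h1 : ∫ x in s..t, deriv f x = f t - f s := by
    have h2 : ∫ x in s..t, deriv f x =
        ∫ x in s..t, (((deriv u x : ℝ) : ℂ) + ((deriv v x : ℝ) : ℂ) * Complex.I) := by
      apply intervalIntegral.integral_congr_ae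
      filter_upwards [hder] with x hx h
      rw [uIoc_of_le hst] at h
      exact hx (hsub h)
    have q1 : IntervalIntegrable (deriv u) volume s t :=
      (intervalIntegrable_iff_integrableOn_Ioc_of_le hst).2 (r1.mono_set hsub)
    have q2 : IntervalIntegrable (deriv v) volume s t :=
      (intervalIntegrable_iff_integrableOn_Ioc_of_le hst).2 (i1.mono_set hsub)
    rw [h2, intervalIntegral.integral_add, intervalIntegral.integral_mul_const,
      intervalIntegral.integral_ofReal, intervalIntegral.integral_ofReal, r3 s hs t ht hst,
      i3 s hs t ht hst]
    · apply Complex.ext <;> simp [u, v]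
    · exact ⟨q1.1.ofReal, q1.2.ofReal⟩
    · exact IntervalIntegrable.mul_const (f := fun x => ((deriv v x : ℝ) : ℂ)) ⟨q2.1.ofReal, q2.2.ofReal⟩ _
  rw [← h1]
  exact intervalIntegral.norm_integral_le_integral_norm hst

/-- **Proposition cover.** The family of intervals `J(t₁)`, `t₁ ∈ I'`,
satisfying the calibration identity and preferring intervals of first kind, has a countable
subfamily covering `I'` such that every point of `I'` lies in at most two of its members;
in particular the total length is at most `2|I'|`. -/
theorem special_cover (nb : ℕ) (hnb : 2 ≤ nb) (a b : ℝ) (hab : a < b)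
    (d : ℕ → ℕ → ℝ → ℂ)
    (hC : ∀ i ∈ Finset.Icc 2 nb, MemCk1 (d i) (nb - 1) (Icc a b))
    (r : ℕ → ℝ → ℂ)
    (hAC : ∀ i ∈ Finset.Icc 2 nb, AbsContOn (r i) (Ioo a b))
    (hroot : ∀ i ∈ Finset.Icc 2 nb, ∀ t ∈ Ioo a b, r i t ^ i = d i 0 t)
    (I' : Set ℝ) (hI' : I' = {t | t ∈ Ioo a b ∧ ∃ i ∈ Finset.Icc 2 nb, d i 0 t ≠ 0})
    (ℓ : ℝ → ℕ)
    (hℓ : ∀ t₁ ∈ I', ℓ t₁ ∈ Finset.Icc 2 nb ∧ d (ℓ t₁) 0 t₁ ≠ 0 ∧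
      ∀ i ∈ Finset.Icc 2 nb, ‖d i 0 t₁‖ ^ ((i : ℝ)⁻¹) ≤ ‖d (ℓ t₁) 0 t₁‖ ^ ((ℓ t₁ : ℝ)⁻¹))
    (D L : ℝ) (hD0 : 0 < D) (hD : D < 1 / 3) (hL : 0 < L)
    (J : ℝ → ℝ × ℝ)
    (hJ : ∀ t₁ ∈ I', (J t₁).1 < t₁ ∧ t₁ < (J t₁).2 ∧ Ioo (J t₁).1 (J t₁).2 ⊆ Ioo a b ∧
      L * ((J t₁).2 - (J t₁).1) +
        (∑ i ∈ Finset.Icc 2 nb, ∫ t in Ioo (J t₁).1 (J t₁).2, ‖deriv (r i) t‖) =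
        D * ‖d (ℓ t₁) 0 t₁‖ ^ ((ℓ t₁ : ℝ)⁻¹))
    (hfirst : ∀ t₁ ∈ I', (∃ sm sp : ℝ, FirstKind nb a b L D d r ℓ t₁ sm sp) →
      FirstKind nb a b L D d r ℓ t₁ (J t₁).1 (J t₁).2) :
    ∃ T : Set ℝ, T ⊆ I' ∧ T.Countable ∧
      (I' ⊆ ⋃ t ∈ T, Ioo (J t).1 (J t).2) ∧
      (∀ x ∈ I', {t | t ∈ T ∧ x ∈ Ioo (J t).1 (J t).2}.encard ≤ 2) ∧
      ∑' t : T, ((J (t : ℝ)).2 - (J (t : ℝ)).1) ≤ 2 * (volume I').toReal := by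
  classical
  have hne : (Finset.Icc 2 nb).Nonempty := ⟨2, Finset.mem_Icc.2 ⟨le_rfl, hnb⟩⟩
  set M : ℝ → ℝ := fun t => (Finset.Icc 2 nb).sup' hne (fun i => ‖r i t‖) with hMdef
  set Φ : ℝ → ℝ := fun x => L * (x - a) +
    ∑ i ∈ Finset.Icc 2 nb, ∫ t in a..x, ‖deriv (r i) t‖ with hΦdef
  have hac := fun i hi => ac_complex (r i) a b hab (hAC i hi)
  have hii : ∀ i ∈ Finset.Icc 2 nb, ∀ s ∈ Icc a b, ∀ t ∈ Icc a b,
      IntervalIntegrable (fun x => ‖deriv (r i) x‖) volume s t := by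
    intro i hi s hs t ht
    have h1 : IntervalIntegrable (fun x => ‖deriv (r i) x‖) volume a b :=
      (intervalIntegrable_iff_integrableOn_Ioo_of_le hab.le).2 (hac i hi).1
    refine h1.mono_set ?_
    rw [uIcc_of_le hab.le]
    exact uIcc_subset_Icc hs ht
  have haI : a ∈ Icc a b := ⟨le_rfl, hab.le⟩
  have hΦsub : ∀ s ∈ Icc a b, ∀ t ∈ Icc a b, Φ t - Φ s =
      L * (t - s) + ∑ i ∈ Finset.Icc 2 nb, ∫ x in s..t, ‖deriv (r i) x‖ := by
    intro s hs t ht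
    have : ∑ i ∈ Finset.Icc 2 nb, ∫ x in s..t, ‖deriv (r i) x‖ =
        (∑ i ∈ Finset.Icc 2 nb, ∫ x in a..t, ‖deriv (r i) x‖) -
        (∑ i ∈ Finset.Icc 2 nb, ∫ x in a..s, ‖deriv (r i) x‖) := by
      rw [← Finset.sum_sub_distrib]
      refine Finset.sum_congr rfl fun i hi => ?_
      rw [intervalIntegral.integral_interval_sub_left (hii i hi a haI t ht) (hii i hi a haI s hs)]
    rw [this]
    simp only [hΦdef]
    ring
  have hΦsub' : ∀ s ∈ Icc a b, ∀ t ∈ Icc a b, s ≤ t → Φ t - Φ s =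
      L * (t - s) + ∑ i ∈ Finset.Icc 2 nb, ∫ x in Ioo s t, ‖deriv (r i) x‖ := by
    intro s hs t ht hst
    rw [hΦsub s hs t ht]
    congr 1
    refine Finset.sum_congr rfl fun i _ => ?_
    rw [intervalIntegral.integral_of_le hst, integral_Ioc_eq_integral_Ioo]
  have hsumnn : ∀ s t, s ≤ t → 0 ≤ ∑ i ∈ Finset.Icc 2 nb, ∫ x in s..t, ‖deriv (r i) x‖ :=
    fun s t hst => Finset.sum_nonneg fun i _ =>
      intervalIntegral.integral_nonneg hst fun _ _ => norm_nonneg _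
  have hΦm : StrictMonoOn Φ (Icc a b) := by
    intro s hs t ht hst
    have h1 := hΦsub s hs t ht
    have h2 := hsumnn s t hst.le
    have h3 : 0 < L * (t - s) := mul_pos hL (by linarith)
    linarith
  have hΦc : ContinuousOn Φ (Icc a b) := by
    apply ContinuousOn.add
    · fun_prop
    · apply continuousOn_finsetSum
      intro i hi
      have := intervalIntegral.continuousOn_primitive_interval' (hii i hi a haI b ⟨hab.le, le_rfl⟩)
        (left_mem_uIcc)
      rwa [uIcc_of_le hab.le] at this
  have hM0 : ∀ t, 0 ≤ M t := by
    intro t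
    obtain ⟨i, hi⟩ := hne
    exact (norm_nonneg (r i t)).trans (Finset.le_sup' (fun i => ‖r i t‖) hi)
  have hrd : ∀ i ∈ Finset.Icc 2 nb, ∀ t ∈ Ioo a b, ‖d i 0 t‖ ^ ((i : ℝ)⁻¹) = ‖r i t‖ := by
    intro i hi t ht
    rw [← hroot i hi t ht, norm_pow]
    apply Real.pow_rpow_inv_natCast (norm_nonneg _)
    have := (Finset.mem_Icc.1 hi).1
    omega
  have hMpos : ∀ t ∈ Ioo a b, (0 < M t ↔ t ∈ I') := by
    intro t ht
    rw [hI']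
    simp only [hMdef, Finset.lt_sup'_iff, norm_pos_iff, mem_ofPred_eq]
    constructor
    · rintro ⟨i, hi, h⟩
      exact ⟨ht, i, hi, by rw [← hroot i hi t ht]; exact pow_ne_zero _ h⟩
    · rintro ⟨_, i, hi, h⟩
      refine ⟨i, hi, ?_⟩
      intro h0
      apply h
      rw [← hroot i hi t ht, h0, zero_pow]
      have := (Finset.mem_Icc.1 hi).1
      omega
  have hI'sub : I' ⊆ Ioo a b := by rw [hI']; exact fun t ht => ht.1
  have hMeq : ∀ t ∈ I', ‖d (ℓ t) 0 t‖ ^ ((ℓ t : ℝ)⁻¹) = M t := by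
    intro t ht
    obtain ⟨h1, h2, h3⟩ := hℓ t ht
    have htI := hI'sub ht
    apply le_antisymm
    · rw [hrd _ h1 t htI]
      exact Finset.le_sup' (fun i => ‖r i t‖) h1
    · apply Finset.sup'_le
      intro i hi
      rw [← hrd i hi t htI]
      exact h3 i hi
  have hLip : ∀ s ∈ Ioo a b, ∀ t ∈ Ioo a b, s ≤ t → |M t - M s| ≤ Φ t - Φ s := by
    intro s hs t ht hst
    have hbound : ∀ i ∈ Finset.Icc 2 nb, ‖r i t - r i s‖ ≤ Φ t - Φ s := by
      intro i hi
      refine ((hac i hi).2 s hs t ht hst).trans ?_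
      rw [hΦsub s (Ioo_subset_Icc_self hs) t (Ioo_subset_Icc_self ht)]
      have h1 := Finset.single_le_sum (f := fun i => ∫ x in s..t, ‖deriv (r i) x‖)
        (fun i _ => intervalIntegral.integral_nonneg hst fun _ _ => norm_nonneg _) hi
      have h2 : 0 ≤ L * (t - s) := mul_nonneg hL.le (by linarith)
      linarith
    rw [abs_le]
    constructor
    · have : M s ≤ M t + (Φ t - Φ s) := by
        apply Finset.sup'_le
        intro i hi
        have h1 := hbound i hi
        have h2 : ‖r i t‖ ≤ M t := Finset.le_sup' (fun i => ‖r i t‖) hi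
        have h3 := norm_sub_norm_le (r i s) (r i t)
        rw [norm_sub_rev] at h3
        linarith
      linarith
    · have : M t ≤ M s + (Φ t - Φ s) := by
        apply Finset.sup'_le
        intro i hi
        have h1 := hbound i hi
        have h2 : ‖r i s‖ ≤ M s := Finset.le_sup' (fun i => ‖r i s‖) hi
        have h3 := norm_sub_norm_le (r i t) (r i s)
        linarith
      linarith
  have hJ' : ∀ t ∈ Ioo a b, 0 < M t → a ≤ (J t).1 ∧ (J t).1 < t ∧ t < (J t).2 ∧ (J t).2 ≤ b ∧
      Φ (J t).2 - Φ (J t).1 = D * M t := by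
    intro t ht hMt
    have htI' := (hMpos t ht).1 hMt
    obtain ⟨h1, h2, h3, h4⟩ := hJ t htI'
    have h5 := (Set.Ioo_subset_Ioo_iff (h1.trans h2)).1 h3
    refine ⟨h5.1, h1, h2, h5.2, ?_⟩
    rw [hΦsub' (J t).1 ⟨h5.1, by linarith [ht.2]⟩ (J t).2 ⟨by linarith [ht.1], h5.2⟩
      (h1.trans h2).le, h4, hMeq t htI']
  have hfirst' : ∀ t ∈ Ioo a b, 0 < M t → ∀ sm sp, a ≤ sm → sm < t → t < sp → sp ≤ b →
      Φ t - Φ sm = D / 2 * M t → Φ sp - Φ t = D / 2 * M t →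
      Φ t - Φ (J t).1 = D / 2 * M t ∧ Φ (J t).2 - Φ t = D / 2 * M t := by
    intro t ht hMt sm sp h1 h2 h3 h4 h5 h6
    have htI' := (hMpos t ht).1 hMt
    have htIcc := Ioo_subset_Icc_self ht
    obtain ⟨g1, g2, g3, g4, g5⟩ := hJ' t ht hMt
    have hfk := hfirst t htI' ⟨sm, sp, h2, h3, Ioo_subset_Ioo h1 h4, by
      rw [← hΦsub' sm ⟨h1, by linarith [ht.2]⟩ t htIcc h2.le, h5, hMeq t htI'], by
      rw [← hΦsub' t htIcc sp ⟨by linarith [ht.1], h4⟩ h3.le, h6, hMeq t htI']⟩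
    obtain ⟨_, _, _, k1, k2⟩ := hfk
    rw [← hΦsub' (J t).1 ⟨g1, by linarith [ht.2]⟩ t htIcc g2.le, hMeq t htI'] at k1
    rw [← hΦsub' t htIcc (J t).2 ⟨by linarith [ht.1], g4⟩ g3.le, hMeq t htI'] at k2
    exact ⟨k1, k2⟩
  obtain ⟨hMc, hsub, T0, hT0, hcov, hfin⟩ := point_finite a b D hab hD0 (by linarith) Φ M J hΦc hΦm
    (fun t _ => hM0 t) hLip hJ' hfirst'
  have hopen : IsOpen I' := by
    have h1 : I' = Ioo a b ∩ M ⁻¹' Ioi 0 := by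
      ext t
      constructor
      · intro ht
        exact ⟨hI'sub ht, (hMpos t (hI'sub ht)).2 ht⟩
      · rintro ⟨h1, h2⟩
        exact (hMpos t h1).1 h2
    rw [h1]
    exact hMc.isOpen_inter_preimage isOpen_Ioo isOpen_Ioi
  obtain ⟨T, hT, c1, c2, c3, c4⟩ := cover_select I' hopen.measurableSet
    ((measure_mono hI'sub).trans_lt measure_Ioo_lt_top).ne J T0
    (fun t ht => by
      have := hJ' t (hT0 t ht).1 (hT0 t ht).2
      linarith [this.2.1, this.2.2.1])
    (fun t ht x hx => by
      have := hsub t (hT0 t ht).1 (hT0 t ht).2 x hx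
      exact (hMpos x this.1).1 this.2)
    (fun x hx => hcov x (hI'sub hx) ((hMpos x (hI'sub hx)).2 hx))
    (fun x hx => hfin x (hI'sub hx) ((hMpos x (hI'sub hx)).2 hx))
  exact ⟨T, fun t ht => (hMpos t (hT0 t (hT ht)).1).1 (hT0 t (hT ht)).2, c1, c2, c3, c4⟩
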